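/- Let G = (V,E) be a finite directed acyclic graph with source s and target t in which every node lies on at least one directed s–t path, and let u, v ∈ V with ℓ_u < ℓ_v. Then the ratio φ_v(p)/φ_u(p) tends to 0 as p tends to 0 from above. -/

import Mathlib

/-!
As `p → 0⁺`, an event determined by a random edge set has probability of order `p ^ k`, where `k`
is the least number of edges in a set realising it. In an acyclic graph a walk never repeats an
edge, so for the event defining `φ_v` this number is `ℓ_v`. Hence `φ_v(p) = O(p ^ ℓ_v)` and
`p ^ ℓ_u = O(φ_u(p))`, and `p ^ ℓ_v = o(p ^ ℓ_u)` when `ℓ_u < ℓ_v`.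
-/

open scoped Classical

/-- `PathIn F a b l` means `l` is the list of edges of a directed walk from `a` to `b`
all of whose edges belong to the edge set `F`.  (In a directed acyclic graph every
walk is a path.) -/
inductive PathIn {V : Type*} (F : Finset (V × V)) : V → V → List (V × V) → Prop
  | nil (a : V) : PathIn F a a []
  | cons {a b c : V} {l : List (V × V)} (hab : (a, b) ∈ F) (h : PathIn F b c l) :
      PathIn F a c ((a, b) :: l)

/-- The directed graph with edge set `E` is acyclic: the only directed path from a
node to itself is the empty one. -/
def Acyclic {V : Type*} (E : Finset (V × V)) : Prop :=
  ∀ (a : V) (l : List (V × V)), PathIn E a a l → l = []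

/-- There exists a directed path from `a` to `b` with all edges in `E`. -/
def Reaches {V : Type*} (E : Finset (V × V)) (a b : V) : Prop :=
  ∃ l, PathIn E a b l

/-- `l` is a directed path from `s` to `t` in `E` passing through `v`. -/
def ThroughPath {V : Type*} (E : Finset (V × V)) (s t v : V) (l : List (V × V)) : Prop :=
  PathIn E s t l ∧ (v = s ∨ v ∈ l.map Prod.snd)

/-- Some directed `s`–`t` path through `v` (in the graph with edge set `E`) has all
its edges in `S`. -/
def ActiveThrough {V : Type*} (E S : Finset (V × V)) (s t v : V) : Prop :=
  ∃ l, ThroughPath E s t v l ∧ ∀ e ∈ l, e ∈ S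

/-- The intermediacy `φ_v(p)`: the probability that a random edge subset `S ⊆ E`,
drawn with probability `p^|S| (1-p)^(|E|-|S|)`, contains all edges of some directed
`s`–`t` path through `v`. -/
noncomputable def intermediacy {V : Type*} [DecidableEq V] (E : Finset (V × V)) (p : ℝ)
    (s t v : V) : ℝ :=
  ∑ S ∈ E.powerset, p ^ S.card * (1 - p) ^ (E.card - S.card) *
    (if ActiveThrough E S s t v then 1 else 0)

/-- `Pr(X_{ab} = 1)`: the probability that a random edge subset `S ⊆ E` contains all
edges of some directed path from `a` to `b`. -/
noncomputable def prReach {V : Type*} [DecidableEq V] (E : Finset (V × V)) (p : ℝ)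
    (a b : V) : ℝ :=
  ∑ S ∈ E.powerset, p ^ S.card * (1 - p) ^ (E.card - S.card) *
    (if ∃ l, PathIn E a b l ∧ ∀ e ∈ l, e ∈ S then 1 else 0)

/-- `ℓ_v`: the length of a shortest directed `s`–`t` path passing through `v`. -/
noncomputable def shortestThrough {V : Type*} (E : Finset (V × V)) (s t v : V) : ℕ :=
  sInf {n | ∃ l, ThroughPath E s t v l ∧ l.length = n}

/-- `σ_v`: the maximum number of pairwise edge-disjoint directed `s`–`t` paths all
passing through `v`. -/
noncomputable def maxDisjointThrough {V : Type*} (E : Finset (V × V)) (s t v : V) : ℕ :=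
  sSup {n | ∃ P : Finset (List (V × V)), P.card = n ∧ (∀ l ∈ P, ThroughPath E s t v l) ∧
    ∀ l₁ ∈ P, ∀ l₂ ∈ P, l₁ ≠ l₂ → ∀ e, e ∈ l₁ → e ∉ l₂}

section BernoulliSums

open Asymptotics Filter Topology

theorem isBigO_pow_pow_nhds_zero_of_le {𝕜 : Type*} [NormedField 𝕜] {m n : ℕ} (h : m ≤ n) :
    (fun x : 𝕜 => x ^ n) =O[𝓝 0] fun x => x ^ m := by
  rcases h.eq_or_lt with rfl | hlt
  · exact isBigO_refl _ _
  · exact (isLittleO_pow_pow hlt).isBigO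

theorem isEquivalent_pow_mul_one_sub_pow {𝕜 : Type*} [NormedField 𝕜] (m n : ℕ) :
    (fun x : 𝕜 => x ^ m * (1 - x) ^ n) ~[𝓝 0] fun x => x ^ m := by
  have tendsto_one : Tendsto (fun x : 𝕜 => (1 - x) ^ n) (𝓝 0) (𝓝 1) :=
    Continuous.tendsto' (by fun_prop) 0 1 (by simp)
  have equiv_one := (isEquivalent_const_iff_tendsto one_ne_zero).2 tendsto_one
  simpa [Pi.mul_def] using (IsEquivalent.refl (u := fun x : 𝕜 => x ^ m)).mul equiv_one

theorem sum_pow_mul_one_sub_pow_isBigO_pow {ι 𝕜 : Type*} [NormedField 𝕜] {I : Finset ι}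
    {a : ι → ℕ} {m : ℕ} (ha : ∀ i ∈ I, m ≤ a i) (b : ι → ℕ) :
    (fun x : 𝕜 => ∑ i ∈ I, x ^ a i * (1 - x) ^ b i) =O[𝓝 0] fun x => x ^ m :=
  IsBigO.fun_sum fun i hi =>
    (isEquivalent_pow_mul_one_sub_pow (a i) (b i)).isBigO.trans
      (isBigO_pow_pow_nhds_zero_of_le (ha i hi))

theorem pow_isBigO_sum_pow_mul_one_sub_pow {ι : Type*} {I : Finset ι} {i : ι} (hi : i ∈ I)
    {a : ι → ℕ} {m : ℕ} (ha : a i ≤ m) (b : ι → ℕ) :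
    (fun x : ℝ => x ^ m) =O[𝓝[>] 0] fun x => ∑ j ∈ I, x ^ a j * (1 - x) ^ b j := by
  have pow_isBigO_term : (fun x : ℝ => x ^ m) =O[𝓝[>] 0] fun x => x ^ a i * (1 - x) ^ b i :=
    ((isBigO_pow_pow_nhds_zero_of_le ha).trans
      (isEquivalent_pow_mul_one_sub_pow (a i) (b i)).isBigO_symm).mono nhdsWithin_le_nhds
  refine pow_isBigO_term.trans (IsBigO.of_norm_eventuallyLE ?_)
  filter_upwards [Ioc_mem_nhdsGT (zero_lt_one' ℝ)] with x ⟨hx0, hx1⟩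
  have term_nonneg (j : ι) : 0 ≤ x ^ a j * (1 - x) ^ b j :=
    mul_nonneg (pow_nonneg hx0.le _) (pow_nonneg (sub_nonneg.2 hx1) _)
  rw [Real.norm_of_nonneg (term_nonneg i)]
  exact Finset.single_le_sum (fun j _ => term_nonneg j) hi

end BernoulliSums

section Paths

variable {V : Type*} {E S : Finset (V × V)} {a b s t v : V} {l : List (V × V)}

theorem PathIn.mem_of_mem (h : PathIn E a b l) {e : V × V} (he : e ∈ l) : e ∈ E := by
  induction h with
  | nil => cases he
  | cons hab _ ih =>
    rcases List.mem_cons.1 he with rfl | he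
    · exact hab
    · exact ih he

theorem PathIn.reaches_fst (h : PathIn E a b l) {e : V × V} (he : e ∈ l) : Reaches E a e.1 := by
  induction h with
  | nil => cases he
  | cons hab _ ih =>
    rcases List.mem_cons.1 he with rfl | he
    · exact ⟨[], .nil _⟩
    · obtain ⟨l', hl'⟩ := ih he
      exact ⟨_, .cons hab hl'⟩

theorem Acyclic.not_reaches_of_mem (hE : Acyclic E) (hab : (a, b) ∈ E) : ¬Reaches E b a :=
  fun ⟨_, hl⟩ => List.cons_ne_nil _ _ (hE _ _ (.cons hab hl))

theorem PathIn.nodup (h : PathIn E a b l) (hE : Acyclic E) : l.Nodup := by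
  induction h with
  | nil => exact List.nodup_nil
  | cons hab h ih =>
    exact List.nodup_cons.2 ⟨fun hmem => hE.not_reaches_of_mem hab (h.reaches_fst hmem), ih⟩

theorem ActiveThrough.shortestThrough_le_card (h : ActiveThrough E S s t v) (hE : Acyclic E) :
    shortestThrough E s t v ≤ S.card := by
  obtain ⟨l, hl, hlS⟩ := h
  calc shortestThrough E s t v
    _ ≤ l.length := Nat.sInf_le ⟨l, hl, rfl⟩
    _ = l.toFinset.card := (List.toFinset_card_of_nodup (hl.1.nodup hE)).symm
    _ ≤ S.card := Finset.card_le_card fun e he => hlS e (List.mem_toFinset.1 he)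

theorem exists_throughPath_length_eq_shortestThrough (hv : ∃ l, ThroughPath E s t v l) :
    ∃ l, ThroughPath E s t v l ∧ l.length = shortestThrough E s t v := by
  obtain ⟨l, hl⟩ := hv
  have nonempty : {n | ∃ l, ThroughPath E s t v l ∧ l.length = n}.Nonempty := ⟨_, l, hl, rfl⟩
  exact Nat.sInf_mem nonempty

theorem exists_activeThrough_card_le_shortestThrough (hv : ∃ l, ThroughPath E s t v l) :
    ∃ S ⊆ E, ActiveThrough E S s t v ∧ S.card ≤ shortestThrough E s t v := by
  obtain ⟨l, hl, hlen⟩ := exists_throughPath_length_eq_shortestThrough hv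
  exact ⟨l.toFinset, fun e he => hl.1.mem_of_mem (List.mem_toFinset.1 he),
    ⟨l, hl, fun e he => List.mem_toFinset.2 he⟩, hlen ▸ List.toFinset_card_le l⟩

end Paths

section Intermediacy

open Asymptotics Filter Topology

variable {V : Type*} [DecidableEq V] {E : Finset (V × V)} {s t u v : V}

theorem intermediacy_eq_sum_filter (E : Finset (V × V)) (p : ℝ) (s t v : V) :
    intermediacy E p s t v = ∑ S ∈ E.powerset with ActiveThrough E S s t v,
      p ^ S.card * (1 - p) ^ (E.card - S.card) := by
  simp only [intermediacy, mul_ite, mul_one, mul_zero, Finset.sum_filter]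

theorem intermediacy_isBigO_pow_shortestThrough (hE : Acyclic E) (s t v : V) :
    (intermediacy E · s t v) =O[𝓝 0] (· ^ shortestThrough E s t v) := by
  simp only [intermediacy_eq_sum_filter]
  exact sum_pow_mul_one_sub_pow_isBigO_pow
    (fun S hS => (Finset.mem_filter.1 hS).2.shortestThrough_le_card hE) _

theorem pow_shortestThrough_isBigO_intermediacy (hv : ∃ l, ThroughPath E s t v l) :
    (· ^ shortestThrough E s t v) =O[𝓝[>] 0] (intermediacy E · s t v) := by
  obtain ⟨S, hSE, hS, hcard⟩ := exists_activeThrough_card_le_shortestThrough hv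
  simp only [intermediacy_eq_sum_filter]
  exact pow_isBigO_sum_pow_mul_one_sub_pow
    (Finset.mem_filter.2 ⟨Finset.mem_powerset.2 hSE, hS⟩) hcard _

theorem intermediacy_ratio_tendsto_zero_general (hE : Acyclic E)
    (hu : ∃ l, ThroughPath E s t u l)
    (hlen : shortestThrough E s t u < shortestThrough E s t v) :
    Tendsto (fun p : ℝ => intermediacy E p s t v / intermediacy E p s t u) (𝓝[>] 0) (𝓝 0) := by
  refine IsLittleO.tendsto_div_nhds_zero ?_
  calc (intermediacy E · s t v)
    _ =O[𝓝[>] 0] (· ^ shortestThrough E s t v) :=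
      (intermediacy_isBigO_pow_shortestThrough hE s t v).mono nhdsWithin_le_nhds
    _ =o[𝓝[>] 0] (· ^ shortestThrough E s t u) :=
      (isLittleO_pow_pow hlen).mono nhdsWithin_le_nhds
    _ =O[𝓝[>] 0] (intermediacy E · s t u) := pow_shortestThrough_isBigO_intermediacy hu

end Intermediacy

/-- If every node lies on a directed `s`–`t` path and `ℓ_u < ℓ_v`, then
`φ_v(p) / φ_u(p) → 0` as `p → 0⁺`. -/
theorem intermediacy_ratio_tendsto_zero {V : Type*} [Fintype V] [DecidableEq V]
    (E : Finset (V × V)) (hacyc : Acyclic E) (s t : V)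
    (hall : ∀ x : V, ∃ l, ThroughPath E s t x l) (u v : V)
    (hlen : shortestThrough E s t u < shortestThrough E s t v) :
    Filter.Tendsto (fun p : ℝ => intermediacy E p s t v / intermediacy E p s t u)
      (nhdsWithin 0 (Set.Ioi 0)) (nhds 0) :=
  intermediacy_ratio_tendsto_zero_general hacyc (hall u) hlen
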